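/- For every n ≥ 5, no Condorcet domain on an n-element set is (4,9)-abundant: every Condorcet domain D on an n-element set X (n ≥ 5) has a 4-element subset A ⊆ X such that the restriction of D to A contains at most 8 distinct linear orders. -/

import Mathlib

/-- `r` is a strict total order on `X`, supported on `X` (i.e. `r` never relates
elements outside `X`). -/
def IsLinearOrderOn {α : Type*} (X : Set α) (r : α → α → Prop) : Prop :=
  (∀ a b, r a b → a ∈ X ∧ b ∈ X) ∧
  (∀ a ∈ X, ¬ r a a) ∧
  (∀ a ∈ X, ∀ b ∈ X, ∀ c ∈ X, r a b → r b c → r a c) ∧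
  (∀ a ∈ X, ∀ b ∈ X, a ≠ b → r a b ∨ r b a)

/-- A domain on `X` is a set of linear orders on `X`. -/
def IsDomainOn {α : Type*} (X : Set α) (D : Set (α → α → Prop)) : Prop :=
  ∀ r ∈ D, IsLinearOrderOn X r

/-- The restriction of the order `r` to the subset `A`. -/
def restrictRel {α : Type*} (A : Set α) (r : α → α → Prop) : α → α → Prop :=
  fun a b => a ∈ A ∧ b ∈ A ∧ r a b

/-- The restriction of the domain `D` to the subset `A`: the set of linear orders
on `A` induced by the orders in `D`. -/
def restrictDom {α : Type*} (A : Set α) (D : Set (α → α → Prop)) :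
    Set (α → α → Prop) :=
  restrictRel A '' D

/-- `D` is `(k,s)`-abundant on `X`: its restriction to every `k`-element subset of `X`
contains at least `s` distinct linear orders. -/
def IsAbundant {α : Type*} (X : Set α) (D : Set (α → α → Prop)) (k s : ℕ) : Prop :=
  ∀ A : Set α, A ⊆ X → A.ncard = k → s ≤ (restrictDom A D).ncard

/-- `D` is exactly `(k,s)`-abundant: `(k,s)`-abundant but not `(k,s+1)`-abundant. -/
def IsExactlyAbundant {α : Type*} (X : Set α) (D : Set (α → α → Prop)) (k s : ℕ) : Prop :=
  IsAbundant X D k s ∧ ¬ IsAbundant X D k (s + 1)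

/-- The number of orders in the profile `R` that rank `a` above `b`. -/
noncomputable def majCount {α : Type*} (R : List (α → α → Prop)) (a b : α) : ℕ :=
  Nat.card {i : Fin R.length // (R.get i) a b}

/-- More than half of the orders in the profile `R` rank `a` above `b`. -/
def MajPrefers {α : Type*} (R : List (α → α → Prop)) (a b : α) : Prop :=
  R.length < 2 * majCount R a b

/-- `D` is a Condorcet domain on `X`: it is a domain on `X` and for every profile
(list of orders from `D`) of odd length, the majority relation is transitive on `X`. -/
def IsCondorcetDomain {α : Type*} (X : Set α) (D : Set (α → α → Prop)) : Prop :=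
  IsDomainOn X D ∧
  ∀ R : List (α → α → Prop), (∀ r ∈ R, r ∈ D) → Odd R.length →
    ∀ a ∈ X, ∀ b ∈ X, ∀ c ∈ X,
      MajPrefers R a b → MajPrefers R b c → MajPrefers R a c

/-- A maximal Condorcet domain on `X`. -/
def IsMaximalCondorcetDomain {α : Type*} (X : Set α) (D : Set (α → α → Prop)) : Prop :=
  IsCondorcetDomain X D ∧
  ∀ D' : Set (α → α → Prop), D ⊆ D' → IsCondorcetDomain X D' → D' = D

/-!
By majority transitivity on profiles of three orders, every triple of alternatives satisfies a
never condition: some alternative of the triple never occupies a certain position in it. Going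
through all choices of a never condition for each of the four triples of a four-element set `A`
shows that at most nine orders on `A` satisfy them, and that with nine orders the alternatives that
are never worst in a triple form a rigid pattern: exactly two of the triples, `A \ {m}` with `m` in
a pair `B`, have such an alternative, which is unique and the same element `x ∉ B` for both.

Five alternatives cannot carry this pattern on all their four-element subsets. Write `xᵢ` and `Bᵢ`
for the pattern on the complement of `i`. The triple omitting `i` and `m` lies in the complements of
both, so `m ∈ Bᵢ` implies `i ∈ Bₘ` and `xᵢ = xₘ`. Put `j = xᵢ`. Then `Bⱼ` does not contain `i`,
since `j ∉ Bᵢ`, nor any `m ∈ Bᵢ`, since `j = xₘ ∉ Bₘ`. Together with `j ∉ Bⱼ` this leaves one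
alternative for the pair `Bⱼ`.
-/

open Finset

section CondorcetDomain

variable {α : Type*}

namespace IsLinearOrderOn

variable {X : Set α} {r : α → α → Prop} {a b c : α}

theorem irrefl (hr : IsLinearOrderOn X r) (a : α) : ¬ r a a :=
  fun h => hr.2.1 a (hr.1 a a h).1 h

theorem trans (hr : IsLinearOrderOn X r) (hab : r a b) (hbc : r b c) : r a c :=
  hr.2.2.1 a (hr.1 a b hab).1 b (hr.1 a b hab).2 c (hr.1 b c hbc).2 hab hbc

theorem asymm (hr : IsLinearOrderOn X r) (hab : r a b) : ¬ r b a :=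
  fun hba => hr.irrefl a (hr.trans hab hba)

theorem not_rel_iff (hr : IsLinearOrderOn X r) (ha : a ∈ X) (hb : b ∈ X) (hab : a ≠ b) :
    ¬ r a b ↔ r b a :=
  ⟨(hr.2.2.2 a ha b hb hab).resolve_left, hr.asymm⟩

end IsLinearOrderOn

open Classical in
/-- The position of `x` among the alternatives of `T` in the order `r`, counted from `0`: the
best alternative of `T` has position `0`. -/
noncomputable def position (r : α → α → Prop) (T : Finset α) (x : α) : ℕ :=
  #{y ∈ T | r y x}

open Classical in
theorem position_triple (r : α → α → Prop) {a b c : α} (hab : a ≠ b) (hac : a ≠ c) (hbc : b ≠ c)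
    (x : α) :
    position r {a, b, c} x =
      (if r a x then 1 else 0) + (if r b x then 1 else 0) + (if r c x then 1 else 0) := by
  rw [position, card_filter, sum_insert (by simp [hab, hac]), sum_pair hbc, add_assoc]

namespace IsLinearOrderOn

variable {X : Set α} {r : α → α → Prop} {A : Finset α} {x y : α}

open Classical in
theorem position_lt_card (hr : IsLinearOrderOn X r) (hx : x ∈ A) : position r A x < #A :=
  card_lt_card (filter_ssubset.2 ⟨x, hx, hr.irrefl x⟩)

open Classical in
theorem position_lt_position (hr : IsLinearOrderOn X r) (hx : x ∈ A) (hxy : r x y) :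
    position r A x < position r A y := by
  refine card_lt_card ((ssubset_iff_of_subset fun z hz => ?_).2 ⟨x, ?_, ?_⟩)
  · rw [mem_filter] at hz ⊢
    exact ⟨hz.1, hr.trans hz.2 hxy⟩
  · exact mem_filter.2 ⟨hx, hxy⟩
  · exact fun h => hr.irrefl x (mem_filter.1 h).2

theorem position_lt_position_iff (hr : IsLinearOrderOn X r) (hA : ↑A ⊆ X) (hx : x ∈ A)
    (hy : y ∈ A) : position r A x < position r A y ↔ r x y := by
  refine ⟨fun h => ?_, hr.position_lt_position hx⟩
  have hxy : x ≠ y := fun e => h.ne (by rw [e])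
  exact (hr.2.2.2 x (hA hx) y (hA hy) hxy).resolve_right
    fun h' => h.asymm (hr.position_lt_position hy h')

theorem position_injOn (hr : IsLinearOrderOn X r) (hA : ↑A ⊆ X) :
    Set.InjOn (position r A) A := by
  intro x hx y hy hxy
  by_contra hne
  rcases hr.2.2.2 x (hA hx) y (hA hy) hne with h | h
  · exact (hr.position_lt_position hx h).ne hxy
  · exact (hr.position_lt_position hy h).ne' hxy

theorem position_erase [DecidableEq α] (hr : IsLinearOrderOn X r) (hA : ↑A ⊆ X) (hx : x ∈ A)
    (hy : y ∈ A) : position r (A.erase y) x =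
      position r A x - if position r A y < position r A x then 1 else 0 := by
  classical
  rw [if_congr (hr.position_lt_position_iff hA hy hx) rfl rfl]
  unfold position
  rw [filter_erase]
  split_ifs with hyx
  · exact card_erase_of_mem (mem_filter.2 ⟨hy, hyx⟩)
  · rw [erase_eq_of_notMem (by simp [hyx]), Nat.sub_zero]

end IsLinearOrderOn

/-- The never condition `x N_T k` of the literature, with positions counted from `0`: no order of
`D` puts `x` in position `k` among the alternatives of `T`. -/
def NeverAt (D : Set (α → α → Prop)) (T : Finset α) (x : α) (k : ℕ) : Prop :=
  ∀ r ∈ D, position r T x ≠ k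

/-- No order of `D` ranks `a` above `b` above `c`. -/
def Avoids (D : Set (α → α → Prop)) (a b c : α) : Prop :=
  ∀ r ∈ D, ¬ (r a b ∧ r b c)

open Classical in
theorem majCount_three (r s t : α → α → Prop) (a b : α) :
    majCount [r, s, t] a b =
      (if r a b then 1 else 0) + (if s a b then 1 else 0) + (if t a b then 1 else 0) := by
  rw [majCount, Nat.card_eq_fintype_card, Fintype.card_subtype, card_filter]
  exact Fin.sum_univ_three _

namespace IsCondorcetDomain

variable {X : Set α} {D : Set (α → α → Prop)}

theorem avoids_cyclic (hD : IsCondorcetDomain X D) {a b c : α} (ha : a ∈ X) (hb : b ∈ X)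
    (hc : c ∈ X) : Avoids D a b c ∨ Avoids D b c a ∨ Avoids D c a b := by
  by_contra! h
  simp only [Avoids, not_forall, not_not] at h
  obtain ⟨⟨r, hr, hrab, hrbc⟩, ⟨s, hs, hsbc, hsca⟩, ⟨t, ht, htca, htab⟩⟩ := h
  have hsac : ¬ s a c := (hD.1 s hs).asymm hsca
  have htac : ¬ t a c := (hD.1 t ht).asymm htca
  have majority_trans := hD.2 [r, s, t] (by simp [hr, hs, ht]) ⟨1, rfl⟩ a ha b hb c hc
  simp only [MajPrefers, majCount_three, List.length_cons, List.length_nil, hrab, hrbc, hsbc, htab,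
    hsac, htac, if_true, if_false] at majority_trans
  grind

end IsCondorcetDomain

section NeverConditions

variable {X : Set α} {D : Set (α → α → Prop)} {a b c : α}

/- The six orders of a triple form two cyclic classes, and `D` misses an order of each. Two orders
from different classes agree in exactly one position, so missing both amounts to a never
condition. -/
theorem exists_neverAt_of_avoids (hD : IsDomainOn X D) (ha : a ∈ X) (hb : b ∈ X) (hc : c ∈ X)
    (hab : a ≠ b) (hac : a ≠ c) (hbc : b ≠ c) (h : Avoids D a b c)
    (h' : Avoids D a c b ∨ Avoids D c b a ∨ Avoids D b a c) {T : Finset α}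
    (hT : ∀ x, x ∈ T ↔ x = a ∨ x = b ∨ x = c) : ∃ x ∈ T, ∃ k < 3, NeverAt D T x k := by
  classical
  obtain rfl : T = {a, b, c} := by ext x; simp [hT]
  have rel_triple : ∀ r ∈ D, (¬ r a b ↔ r b a) ∧ (¬ r a c ↔ r c a) ∧ (¬ r b c ↔ r c b) ∧
      ¬ r a a ∧ ¬ r b b ∧ ¬ r c c := fun r hr =>
    ⟨(hD r hr).not_rel_iff ha hb hab, (hD r hr).not_rel_iff ha hc hac,
      (hD r hr).not_rel_iff hb hc hbc, (hD r hr).irrefl a, (hD r hr).irrefl b, (hD r hr).irrefl c⟩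
  rcases h' with h' | h' | h'
  · refine ⟨a, by simp, 0, by simp, fun r hr => ?_⟩
    grind [position_triple, Avoids]
  · refine ⟨b, by simp, 1, by simp, fun r hr => ?_⟩
    grind [position_triple, Avoids]
  · refine ⟨c, by simp, 2, by simp, fun r hr => ?_⟩
    grind [position_triple, Avoids]

theorem IsCondorcetDomain.exists_neverAt (hD : IsCondorcetDomain X D) {T : Finset α}
    (hT : ↑T ⊆ X) (hcard : #T = 3) : ∃ x ∈ T, ∃ k < 3, NeverAt D T x k := by
  classical
  obtain ⟨a, b, c, hab, hac, hbc, rfl⟩ := card_eq_three.1 hcard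
  have ha : a ∈ X := hT (by simp)
  have hb : b ∈ X := hT (by simp)
  have hc : c ∈ X := hT (by simp)
  have avoids_odd := hD.avoids_cyclic ha hc hb
  rcases hD.avoids_cyclic ha hb hc with h | h | h
  · exact exists_neverAt_of_avoids hD.1 ha hb hc hab hac hbc h (by tauto) (by simp)
  · exact exists_neverAt_of_avoids hD.1 hb hc ha hbc hab.symm hac.symm h (by tauto) (by grind)
  · exact exists_neverAt_of_avoids hD.1 hc ha hb hac.symm hbc.symm hab h (by tauto) (by grind)

end NeverConditions

section NeverWorstPattern

variable [DecidableEq α] {D : Set (α → α → Prop)}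

/-- The alternatives that are never worst in a triple of `A` are distributed as in a Condorcet
domain with nine orders on a four-element set `A`: the triples having such an alternative are the
two sets `A \ {m}` with `m ∈ B`, and in both of them it is `x` and no other. -/
structure IsNeverWorstPattern (D : Set (α → α → Prop)) (A : Finset α) (x : α) (B : Finset α) :
    Prop where
  mem : x ∈ A
  notMem : x ∉ B
  subset : B ⊆ A
  card_eq_two : #B = 2
  neverAt_iff : ∀ m ∈ A, ∀ z ∈ A.erase m, NeverAt D (A.erase m) z 2 ↔ m ∈ B ∧ z = x

theorem IsNeverWorstPattern.mem_and_eq_of_mem {Y : Finset α} {i m x x' : α} {B B' : Finset α}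
    (h : IsNeverWorstPattern D (Y.erase i) x B) (h' : IsNeverWorstPattern D (Y.erase m) x' B')
    (hi : i ∈ Y) (hm : m ∈ B) : i ∈ B' ∧ x = x' := by
  have hmY : m ∈ Y.erase i := h.subset hm
  have hx : x ∈ (Y.erase i).erase m := mem_erase.2 ⟨fun hxm => h.notMem (hxm ▸ hm), h.mem⟩
  have hnever : NeverAt D ((Y.erase i).erase m) x 2 := (h.neverAt_iff m hmY x hx).2 ⟨hm, rfl⟩
  rw [erase_right_comm] at hx hnever
  exact (h'.neverAt_iff i (mem_erase.2 ⟨(ne_of_mem_erase hmY).symm, hi⟩) x hx).1 hnever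

theorem not_forall_exists_isNeverWorstPattern_erase (D : Set (α → α → Prop)) {Y : Finset α}
    (hY : #Y = 5) : ¬ ∀ i ∈ Y, ∃ x B, IsNeverWorstPattern D (Y.erase i) x B := by
  intro h
  choose! x B hxB using h
  obtain ⟨i, hi⟩ : Y.Nonempty := card_pos.1 (by omega)
  have hx : x i ∈ Y.erase i := (hxB i hi).mem
  have hxY : x i ∈ Y := mem_of_mem_erase hx
  have hsubset : B (x i) ⊆ ((Y.erase i).erase (x i)) \ B i := by
    intro m hm
    have hmYx : m ∈ Y.erase (x i) := (hxB _ hxY).subset hm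
    have hmY : m ∈ Y := mem_of_mem_erase hmYx
    have hxm : x i ∈ B m := ((hxB _ hxY).mem_and_eq_of_mem (hxB m hmY) hxY hm).1
    have hmi : m ≠ i := fun hmi => (hxB i hi).notMem (hmi ▸ hxm)
    have hmB : m ∉ B i := fun hmB => (hxB m hmY).notMem
      (((hxB i hi).mem_and_eq_of_mem (hxB m hmY) hi hmB).2 ▸ hxm)
    exact mem_sdiff.2 ⟨mem_erase.2 ⟨ne_of_mem_erase hmYx, mem_erase.2 ⟨hmi, hmY⟩⟩, hmB⟩
  have hBi : B i ⊆ (Y.erase i).erase (x i) :=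
    subset_erase.2 ⟨(hxB i hi).subset, (hxB i hi).notMem⟩
  have hcard := card_le_card hsubset
  rw [card_sdiff_of_subset hBi, card_erase_of_mem hx, card_erase_of_mem hi, hY,
    (hxB i hi).card_eq_two, (hxB _ hxY).card_eq_two] at hcard
  omega

end NeverWorstPattern

/-- The bijections of `Fin n` with `{0, …, n - 1}`, as the possible vectors of positions of `n`
alternatives. The values are in `ℕ`, and the set is built from lists, for fast evaluation by the
kernel. -/
def rankings (n : ℕ) : Finset (Fin n → ℕ) :=
  ((List.range n).permutations'.map fun l (i : Fin n) => l.getD i 0).toFinset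

theorem mem_rankings {n : ℕ} {v : Fin n → ℕ} (hv : Function.Injective v) (hlt : ∀ i, v i < n) :
    v ∈ rankings n := by
  have hsubset : List.ofFn v ⊆ List.range n := fun k hk => by
    obtain ⟨i, rfl⟩ := List.mem_ofFn.1 hk
    exact List.mem_range.2 (hlt i)
  have hperm : (List.ofFn v).Perm (List.range n) :=
    ((List.nodup_ofFn.2 hv).subperm hsubset).perm_of_length_le (by simp)
  refine List.mem_toFinset.2 (List.mem_map.2 ⟨_, List.mem_permutations'.2 hperm, ?_⟩)
  ext i
  simp

/-- The position of `x` among the alternatives other than `m`, computed from the vector `v` of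
positions of all alternatives. -/
def positionErase {n : ℕ} (v : Fin n → ℕ) (m x : Fin n) : ℕ :=
  v x - if v m < v x then 1 else 0

/-- The analogue of `IsNeverWorstPattern` for a set of position vectors on four alternatives. -/
def HasNeverWorstPattern (S : Finset (Fin 4 → ℕ)) : Prop :=
  ∃ x : Fin 4, ∃ B : Finset (Fin 4), x ∉ B ∧ #B = 2 ∧
    ∀ m z, z ≠ m → ((∀ v ∈ S, positionErase v m z ≠ 2) ↔ m ∈ B ∧ z = x)

instance : DecidablePred HasNeverWorstPattern :=
  fun _ => inferInstanceAs (Decidable (∃ _, _))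

/-- The decision tree that imposes in turn, for each `m` in the list, every possible never
condition on the triple omitting `m`, and stops as soon as at most eight vectors of `S` are left. -/
def NeverSearch : List (Fin 4) → Finset (Fin 4 → ℕ) → Prop
  | [], S => #S ≤ 8 ∨ #S = 9 ∧ HasNeverWorstPattern S
  | m :: ms, S => #S ≤ 8 ∨
      ∀ x, x ≠ m → ∀ k < 3, NeverSearch ms {v ∈ S | positionErase v m x ≠ k}

instance decidableNeverSearch : ∀ ms S, Decidable (NeverSearch ms S)
  | [], _ => inferInstanceAs (Decidable (_ ∨ _))
  | _ :: ms, _ =>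
    have := decidableNeverSearch ms
    inferInstanceAs (Decidable (_ ∨ _))

theorem neverSearch_rankings : NeverSearch [0, 1, 2, 3] (rankings 4) := by
  decide +kernel

theorem NeverSearch.hasNeverWorstPattern {ms : List (Fin 4)} {S E : Finset (Fin 4 → ℕ)}
    (hS : NeverSearch ms S) (hES : E ⊆ S) (hE : 8 < #E)
    (hnever : ∀ m ∈ ms, ∃ x, x ≠ m ∧ ∃ k < 3, ∀ v ∈ E, positionErase v m x ≠ k) :
    HasNeverWorstPattern E := by
  induction ms generalizing S with
  | nil =>
    obtain ⟨hcard, hpattern⟩ := hS.resolve_left (hE.trans_le (card_le_card hES)).not_ge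
    rwa [eq_of_subset_of_card_le hES (hcard.trans_le hE)]
  | cons m ms ih =>
    obtain ⟨x, hxm, k, hk, hmx⟩ := hnever m List.mem_cons_self
    have hsearch := hS.resolve_left (hE.trans_le (card_le_card hES)).not_ge x hxm k hk
    exact ih hsearch (fun v hv => mem_filter.2 ⟨hES hv, hmx v hv⟩)
      fun m' hm' => hnever m' (List.mem_cons_of_mem m hm')

section PositionVectors

variable {X : Set α} {D : Set (α → α → Prop)} {A : Finset α} {n : ℕ}

theorem IsLinearOrderOn.positions_mem_rankings {r : α → α → Prop} (hr : IsLinearOrderOn X r)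
    (hA : ↑A ⊆ X) (e : Fin n ≃ A) : (fun i => position r A (e i)) ∈ rankings n := by
  have hcard : #A = n := by simpa using (Fintype.card_congr e).symm
  refine mem_rankings (fun i j hij => ?_)
    fun i => (hr.position_lt_card (e i).2).trans_eq hcard
  exact e.injective (Subtype.ext (hr.position_injOn hA (e i).2 (e j).2 hij))

open Classical in
/-- The position vectors on `A` of the orders of `D`, where `e` numbers the alternatives of `A`. -/
noncomputable def positionVectors (D : Set (α → α → Prop)) (e : Fin n ≃ A) :
    Finset (Fin n → ℕ) :=
  {v ∈ rankings n | ∃ r ∈ D, v = fun i => position r A (e i)}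

open Classical in
theorem positionVectors_subset_rankings (D : Set (α → α → Prop)) (e : Fin n ≃ A) :
    positionVectors D e ⊆ rankings n :=
  filter_subset _ _

theorem forall_mem_positionVectors (hD : IsDomainOn X D) (hA : ↑A ⊆ X) (e : Fin n ≃ A)
    {p : (Fin n → ℕ) → Prop} :
    (∀ v ∈ positionVectors D e, p v) ↔ ∀ r ∈ D, p fun i => position r A (e i) := by
  simp only [positionVectors, mem_filter]
  refine ⟨fun h r hr => h _ ⟨(hD r hr).positions_mem_rankings hA e, r, hr, rfl⟩, ?_⟩
  rintro h _ ⟨-, r, hr, rfl⟩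
  exact h r hr

theorem neverAt_erase_iff [DecidableEq α] (hD : IsDomainOn X D) (hA : ↑A ⊆ X) (e : Fin n ≃ A)
    (m x : Fin n) (k : ℕ) : NeverAt D (A.erase (e m)) (e x) k ↔
      ∀ v ∈ positionVectors D e, positionErase v m x ≠ k := by
  rw [forall_mem_positionVectors hD hA]
  refine forall₂_congr fun r hr => ?_
  rw [(hD r hr).position_erase hA (e x).2 (e m).2, positionErase]

theorem ncard_restrictDom_le_card_positionVectors (hD : IsDomainOn X D) (hA : ↑A ⊆ X)
    (e : Fin n ≃ A) : (restrictDom A D).ncard ≤ #(positionVectors D e) := by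
  let relOfVector (v : Fin n → ℕ) (a b : α) : Prop :=
    ∃ (ha : a ∈ A) (hb : b ∈ A), v (e.symm ⟨a, ha⟩) < v (e.symm ⟨b, hb⟩)
  have hsubset : restrictDom A D ⊆ relOfVector '' positionVectors D e := by
    rintro _ ⟨r, hr, rfl⟩
    refine ⟨_, (forall_mem_positionVectors hD hA e).1 (fun _ hv => hv) r hr, ?_⟩
    ext a b
    simp only [relOfVector, restrictRel, mem_coe, Equiv.apply_symm_apply, exists_prop]
    exact and_congr_right fun ha => and_congr_right fun hb =>
      (hD r hr).position_lt_position_iff hA ha hb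
  calc (restrictDom A D).ncard
      ≤ (relOfVector '' positionVectors D e).ncard := Set.ncard_le_ncard hsubset
    _ ≤ (positionVectors D e : Set (Fin n → ℕ)).ncard := Set.ncard_image_le
    _ = #(positionVectors D e) := Set.ncard_coe_finset _

theorem HasNeverWorstPattern.exists_isNeverWorstPattern [DecidableEq α] (hD : IsDomainOn X D)
    (hA : ↑A ⊆ X) (e : Fin 4 ≃ A) (h : HasNeverWorstPattern (positionVectors D e)) :
    ∃ x B, IsNeverWorstPattern D A x B := by
  obtain ⟨x, B, hxB, hB, hiff⟩ := h
  let toAlt : Fin 4 ↪ α := e.toEmbedding.trans (Function.Embedding.subtype _)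
  have exists_toAlt {z : α} (hz : z ∈ A) : ∃ i, toAlt i = z := ⟨e.symm ⟨z, hz⟩, by simp [toAlt]⟩
  refine ⟨toAlt x, B.map toAlt, (e x).2, by simpa using hxB, ?_, by simpa using hB, ?_⟩
  · intro z hz
    obtain ⟨i, -, rfl⟩ := mem_map.1 hz
    exact (e i).2
  · intro m hm z hz
    obtain ⟨i, rfl⟩ := exists_toAlt hm
    obtain ⟨j, rfl⟩ := exists_toAlt (mem_of_mem_erase hz)
    have hji : j ≠ i := fun h => ne_of_mem_erase hz (by rw [h])
    rw [mem_map' toAlt, toAlt.injective.eq_iff, ← hiff i j hji]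
    exact neverAt_erase_iff hD hA e i j 2

theorem IsCondorcetDomain.exists_forall_positionErase_ne (hD : IsCondorcetDomain X D)
    (hA : ↑A ⊆ X) (e : Fin 4 ≃ A) (m : Fin 4) :
    ∃ x, x ≠ m ∧ ∃ k < 3, ∀ v ∈ positionVectors D e, positionErase v m x ≠ k := by
  classical
  have hcard : #(A.erase (e m)) = 3 := by
    rw [card_erase_of_mem (e m).2, ← Fintype.card_coe A, ← Fintype.card_congr e, Fintype.card_fin]
  obtain ⟨x, hx, k, hk, hxk⟩ :=
    hD.exists_neverAt (fun z hz => hA (mem_of_mem_erase hz)) hcard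
  obtain ⟨i, hi⟩ := e.surjective ⟨x, mem_of_mem_erase hx⟩
  obtain rfl : (e i : α) = x := congrArg Subtype.val hi
  have him : i ≠ m := fun him => ne_of_mem_erase hx (by rw [him])
  exact ⟨i, him, k, hk, (neverAt_erase_iff hD.1 hA e m i k).1 hxk⟩

theorem IsCondorcetDomain.exists_isNeverWorstPattern [DecidableEq α] (hD : IsCondorcetDomain X D)
    (hA : ↑A ⊆ X) (hcard : #A = 4) (hlarge : 8 < (restrictDom A D).ncard) :
    ∃ x B, IsNeverWorstPattern D A x B := by
  let e : Fin 4 ≃ A := (A.equivFinOfCardEq hcard).symm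
  have hvectors : 8 < #(positionVectors D e) :=
    hlarge.trans_le (ncard_restrictDom_le_card_positionVectors hD.1 hA e)
  have hpattern : HasNeverWorstPattern (positionVectors D e) :=
    neverSearch_rankings.hasNeverWorstPattern (positionVectors_subset_rankings D e) hvectors
      fun m _ => hD.exists_forall_positionErase_ne hA e m
  exact hpattern.exists_isNeverWorstPattern hD.1 hA e

end PositionVectors

end CondorcetDomain

/-- For `n ≥ 5`, no Condorcet domain on an `n`-element set is `(4,9)`-abundant:
it has a 4-element subset whose restriction contains at most 8 orders. -/
theorem no_four_nine_abundant {α : Type*} (X : Set α) (hX : X.Finite)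
    (hXcard : 5 ≤ X.ncard) (D : Set (α → α → Prop)) (hD : IsCondorcetDomain X D) :
    ∃ A : Set α, A ⊆ X ∧ A.ncard = 4 ∧ (restrictDom A D).ncard ≤ 8 := by
  classical
  by_contra! hlarge
  obtain ⟨Y, hYX, hY⟩ := exists_subset_card_eq
    (hXcard.trans_eq (Set.ncard_eq_toFinset_card X hX))
  rw [Set.Finite.subset_toFinset] at hYX
  refine not_forall_exists_isNeverWorstPattern_erase D hY fun i hi => ?_
  have hA : ↑(Y.erase i) ⊆ X := (coe_subset.2 (erase_subset i Y)).trans hYX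
  have hcard : #(Y.erase i) = 4 := by rw [card_erase_of_mem hi, hY]
  exact hD.exists_isNeverWorstPattern hA hcard
    (hlarge _ hA (by rw [Set.ncard_coe_finset, hcard]))
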